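/- arXiv:1708.09845 — 4 statements merged into one kernel-verified Lean document; each statement's English description precedes it below -/
import Mathlib

section
/- Let A be a real m×n matrix of full column rank and G an m×m real symmetric positive definite matrix; set Ĝ = Aᵀ G A. Let Ωⱼ ∈ ℝ^{n×l_j} for j = 1, …, s be matrices such that each A Ωⱼ has full column rank, and suppose the concatenated matrix 𝛀 = [Ω₁, …, Ω_s] ∈ ℝ^{n×Σⱼ l_j} has full row rank n. Then for any probabilities p₁, …, p_s > 0, the matrix E[W] = Σⱼ pⱼ Ωⱼ (Ωⱼᵀ Ĝ Ωⱼ)⁻¹ Ωⱼᵀ is symmetric positive definite. (Note each Ωⱼᵀ Ĝ Ωⱼ = (AΩⱼ)ᵀ G (AΩⱼ) is invertible since AΩⱼ has full column rank and G is positive definite.) -/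
open Matrix

/-- if `A` has full column rank, `G` is SPD, each `A Ωⱼ` has full
column rank and the concatenation `𝛀 = [Ω₁, …, Ω_s]` has full row rank, then
`E[W] = Σⱼ pⱼ Ωⱼ (Ωⱼᵀ Ĝ Ωⱼ)⁻¹ Ωⱼᵀ` is symmetric positive definite
(`Ĝ = Aᵀ G A`). -/
theorem stmt5 {m n s : ℕ}
    (A : Matrix (Fin m) (Fin n) ℝ) (hA : Function.Injective A.mulVec)
    (G : Matrix (Fin m) (Fin m) ℝ) (hG : G.PosDef)
    (l : Fin s → ℕ) (Ω : ∀ j : Fin s, Matrix (Fin n) (Fin (l j)) ℝ)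
    (hAΩ : ∀ j, Function.Injective (A * Ω j).mulVec)
    (hrow : Function.Injective fun x : Fin n → ℝ =>
      Matrix.vecMul x (Matrix.of fun i (q : Σ j : Fin s, Fin (l j)) => Ω q.1 i q.2))
    (p : Fin s → ℝ) (hp : ∀ j, 0 < p j) (hps : ∑ j, p j = 1) :
    (∑ j, p j • (Ω j * ((Ω j)ᵀ * (Aᵀ * G * A) * Ω j)⁻¹ * (Ω j)ᵀ)).PosDef := by
  have hK : ∀ j, ((Ω j)ᵀ * (Aᵀ * G * A) * Ω j)⁻¹.PosDef := by
    intro j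
    have h := (hG.conjTranspose_mul_mul_same (hAΩ j)).inv
    rw [conjTranspose_eq_transpose_of_trivial, transpose_mul] at h
    simpa only [Matrix.mul_assoc] using h
  generalize hKd : (fun j => ((Ω j)ᵀ * (Aᵀ * G * A) * Ω j)⁻¹) = K at *
  have hKj : ∀ j, ((Ω j)ᵀ * (Aᵀ * G * A) * Ω j)⁻¹ = K j := fun j => congrFun hKd j
  simp only [hKj] at hK ⊢
  have hS : ∀ j, (Ω j * K j * (Ω j)ᵀ).PosSemidef := by
    intro j
    have h := (hK j).posSemidef.mul_mul_conjTranspose_same (Ω j)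
    rwa [conjTranspose_eq_transpose_of_trivial] at h
  refine PosDef.of_dotProduct_mulVec_pos ?_ ?_
  · exact (posSemidef_sum _ fun j _ => (hS j).smul (hp j).le).1
  · intro x hx
    obtain ⟨j, hj⟩ : ∃ j, (Ω j)ᵀ *ᵥ x ≠ 0 := by
      by_contra hc
      push Not at hc
      apply hx
      apply hrow
      funext q
      have h := congrFun (hc q.1) q.2
      rw [mulVec_transpose] at h
      simpa [vecMul, dotProduct] using h
    rw [Matrix.sum_mulVec, dotProduct_sum]
    refine Finset.sum_pos' (fun i _ => ?_) ⟨j, Finset.mem_univ j, ?_⟩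
    · exact ((hS i).smul (hp i).le).dotProduct_mulVec_nonneg x
    · have h := (hK j).dotProduct_mulVec_pos hj
      rw [smul_mulVec, dotProduct_smul, smul_eq_mul]
      refine mul_pos (hp j) ?_
      have e : star x ⬝ᵥ ((Ω j * K j * (Ω j)ᵀ) *ᵥ x)
          = star ((Ω j)ᵀ *ᵥ x) ⬝ᵥ (K j *ᵥ ((Ω j)ᵀ *ᵥ x)) := by
        rw [← mulVec_mulVec, ← mulVec_mulVec, dotProduct_mulVec, star_trivial, star_trivial,
          mulVec_transpose]
      rw [e]
      exact h
end

section
/- Let A be a real m×n matrix, G an m×m real symmetric positive definite matrix, and Ω a nonzero real m×l matrix such that Ωᵀ A G Aᵀ Ω is invertible. Then Aᵀ Ω (Ωᵀ A G Aᵀ Ω)⁻¹ Ωᵀ A ⪰ (1/(λ_max(A G Aᵀ) · ‖Ωᵀ Ω‖₂)) · Aᵀ Ω Ωᵀ A in the Loewner order. -/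
open Matrix
open scoped Matrix.Norms.L2Operator

theorem aux_norm {l : ℕ} (M : Matrix (Fin l) (Fin l) ℝ) (hM : M.IsHermitian) :
    (‖M‖ • (1 : Matrix (Fin l) (Fin l) ℝ) - M).PosSemidef := by
  refine PosSemidef.of_dotProduct_mulVec_nonneg ?_ ?_
  · refine IsHermitian.sub ?_ hM
    simp [IsHermitian]
  · intro x
    have h1 := l2_opNorm_mulVec M (WithLp.toLp 2 x)
    have h2 := real_inner_le_norm (WithLp.toLp 2 x) (WithLp.toLp 2 (M *ᵥ x))
    have h3 : inner ℝ (WithLp.toLp 2 x) (WithLp.toLp 2 (M *ᵥ x)) = x ⬝ᵥ (M *ᵥ x) := by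
      rw [EuclideanSpace.inner_toLp_toLp, dotProduct_comm]; simp
    have h4 : ‖WithLp.toLp 2 x‖ * ‖WithLp.toLp 2 x‖ = x ⬝ᵥ x := by
      rw [← real_inner_self_eq_norm_mul_norm, EuclideanSpace.inner_toLp_toLp]; simp
    have h5 : ‖WithLp.toLp 2 (M *ᵥ x)‖ ≤ ‖M‖ * ‖WithLp.toLp 2 x‖ := h1
    have h6 := mul_le_mul_of_nonneg_left h5 (norm_nonneg (WithLp.toLp 2 x))
    simp only [star_trivial, sub_mulVec, smul_mulVec, one_mulVec, dotProduct_sub, dotProduct_smul,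
      smul_eq_mul]
    rw [← h4, ← h3]
    linarith

theorem aux_eig {m : ℕ} (H : Matrix (Fin m) (Fin m) ℝ) (hH : H.IsHermitian) :
    ((⨆ i, hH.eigenvalues i) • (1 : Matrix (Fin m) (Fin m) ℝ) - H).PosSemidef := by
  have hd : (diagonal (fun j => (⨆ i, hH.eigenvalues i) - hH.eigenvalues j)).PosSemidef := by
    refine PosSemidef.diagonal ?_
    intro j
    exact sub_nonneg.2 (le_ciSup (Set.finite_range _).bddAbove j)
  have h := hd.mul_mul_conjTranspose_same (hH.eigenvectorUnitary : Matrix (Fin m) (Fin m) ℝ)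
  convert h using 1
  have hs := hH.spectral_theorem
  rw [Unitary.conjStarAlgAut_apply] at hs
  have hu : (hH.eigenvectorUnitary : Matrix (Fin m) (Fin m) ℝ) *
      (hH.eigenvectorUnitary : Matrix (Fin m) (Fin m) ℝ)ᴴ = 1 :=
    Unitary.coe_mul_star_self hH.eigenvectorUnitary
  have he : diagonal (fun j => (⨆ i, hH.eigenvalues i) - hH.eigenvalues j) =
      (⨆ i, hH.eigenvalues i) • (1 : Matrix (Fin m) (Fin m) ℝ) -
        diagonal (RCLike.ofReal ∘ hH.eigenvalues) := by
    rw [smul_one_eq_diagonal, diagonal_sub]; rfl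
  rw [he, mul_sub, sub_mul, mul_smul_comm, smul_mul_assoc, mul_one, hu]
  congr 1

theorem aux_inv {l : ℕ} (S : Matrix (Fin l) (Fin l) ℝ) (hS : S.PosSemidef) (hu : IsUnit S)
    (c : ℝ) (hc : (c • (1 : Matrix (Fin l) (Fin l) ℝ) - S).PosSemidef) :
    (S⁻¹ - c⁻¹ • (1 : Matrix (Fin l) (Fin l) ℝ)).PosSemidef := by
  have hdet : IsUnit S.det := (isUnit_iff_isUnit_det S).1 hu
  have h1 := hS.conjTranspose_mul_mul_same (S⁻¹ - c⁻¹ • (1 : Matrix (Fin l) (Fin l) ℝ))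
  have h2 := hc.smul (sq_nonneg c⁻¹)
  have hh : (S⁻¹ - c⁻¹ • (1 : Matrix (Fin l) (Fin l) ℝ))ᴴ = S⁻¹ - c⁻¹ • 1 := by
    rw [conjTranspose_sub, hS.1.inv.eq]; simp
  rw [hh] at h1
  convert h1.add h2 using 1
  have e : c⁻¹ ^ 2 * c = c⁻¹ := by
    by_cases h : c = 0
    · simp [h]
    · field_simp
  rw [smul_sub, smul_smul, e]
  simp only [sub_mul, mul_sub, smul_mul_assoc, mul_smul_comm, one_mul, mul_one,
    nonsing_inv_mul _ hdet, mul_nonsing_inv _ hdet, pow_two, smul_smul, smul_sub]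
  module

/-- for `A ∈ ℝ^{m×n}`, SPD `G` and nonzero `Ω` with
`Ωᵀ A G Aᵀ Ω` invertible,
`Aᵀ Ω (Ωᵀ A G Aᵀ Ω)⁻¹ Ωᵀ A ⪰ (λ_max(A G Aᵀ) ‖Ωᵀ Ω‖₂)⁻¹ Aᵀ Ω Ωᵀ A`
in the Loewner order. -/
theorem stmt12 {m n l : ℕ} (A : Matrix (Fin m) (Fin n) ℝ)
    (G : Matrix (Fin n) (Fin n) ℝ) (hG : G.PosDef)
    (Ω : Matrix (Fin m) (Fin l) ℝ) (hΩ : Ω ≠ 0)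
    (hinv : IsUnit (Ωᵀ * (A * G * Aᵀ) * Ω))
    (hH : (A * G * Aᵀ).IsHermitian) :
    (Aᵀ * Ω * (Ωᵀ * (A * G * Aᵀ) * Ω)⁻¹ * Ωᵀ * A
      - ((⨆ i, hH.eigenvalues i) * ‖Ωᵀ * Ω‖)⁻¹ • (Aᵀ * Ω * Ωᵀ * A)).PosSemidef := by
  have hHp : (A * G * Aᵀ).PosSemidef := by
    simpa using hG.posSemidef.mul_mul_conjTranspose_same A
  have hSp : (Ωᵀ * (A * G * Aᵀ) * Ω).PosSemidef := by
    simpa using hHp.conjTranspose_mul_mul_same Ω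
  have hl : 0 ≤ ⨆ i, hH.eigenvalues i := Real.iSup_nonneg fun i => hHp.eigenvalues_nonneg i
  have hN := (aux_norm (Ωᵀ * Ω) (by simpa using isHermitian_conjTranspose_mul_self Ω)).smul hl
  have hE := (aux_eig _ hH).conjTranspose_mul_mul_same Ω
  have hc := hE.add hN
  have key := aux_inv _ hSp hinv ((⨆ i, hH.eigenvalues i) * ‖Ωᵀ * Ω‖) (by
    convert hc using 1
    simp only [conjTranspose_eq_transpose_of_trivial, Matrix.mul_sub, Matrix.sub_mul, Matrix.mul_smul,
      Matrix.smul_mul, Matrix.mul_one, Matrix.one_mul, smul_sub, smul_smul]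
    module)
  have := key.conjTranspose_mul_mul_same (Ωᵀ * A)
  convert this using 1
  simp only [conjTranspose_eq_transpose_of_trivial, transpose_mul, transpose_transpose, Matrix.mul_sub,
    Matrix.sub_mul, Matrix.mul_smul, Matrix.smul_mul, Matrix.mul_one, Matrix.one_mul, Matrix.mul_assoc]
end

section
/- Let A be a real m×n matrix of full column rank, G an m×m real symmetric positive definite matrix, and Ω a random m×l real matrix with i.i.d. standard normal N(0,1) entries, where 1 ≤ l ≤ min{m,n}. Define T̂ = I_n − G^{1/2} Aᵀ Ω (Ωᵀ A G Aᵀ Ω)⁻¹ Ωᵀ A G^{1/2} (well-defined almost surely since Ωᵀ A G Aᵀ Ω is almost surely invertible). Then E[T̂] ⪯ I_n − (G^{1/2} Aᵀ A G^{1/2}) / (m · λ_max(A G Aᵀ)) in the Loewner order; in particular E[T̂] ≺ I_n (strictly). -/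
open Matrix MeasureTheory ProbabilityTheory
open scoped MatrixOrder

lemma ac_pi {X : Type*} [MeasurableSpace X] (μ ν : Measure X) [SigmaFinite μ] [SigmaFinite ν]
    (h : μ ≪ ν) (k : ℕ) :
    Measure.pi (fun _ : Fin k => μ) ≪ Measure.pi (fun _ : Fin k => ν) := by
  induction k with
  | zero => rw [Measure.pi_of_empty, Measure.pi_of_empty]
  | succ k ih =>
    have h1 := measurePreserving_piFinSuccAbove (fun _ : Fin (k+1) => μ) 0
    have h2 := measurePreserving_piFinSuccAbove (fun _ : Fin (k+1) => ν) 0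
    have h3 := (h.prod ih)
    rw [← (h1.symm).map_eq, ← (h2.symm).map_eq]
    exact h3.map (MeasurableEquiv.measurable _)

lemma proj_facts {n l : ℕ} (Y : Matrix (Fin n) (Fin l) ℝ) :
    (Y * (Yᵀ * Y)⁻¹ * Yᵀ)ᵀ = Y * (Yᵀ * Y)⁻¹ * Yᵀ ∧
    (Y * (Yᵀ * Y)⁻¹ * Yᵀ) * (Y * (Yᵀ * Y)⁻¹ * Yᵀ) = Y * (Yᵀ * Y)⁻¹ * Yᵀ ∧
    (IsUnit (Yᵀ * Y).det → (Y * (Yᵀ * Y)⁻¹ * Yᵀ) * Y = Y) := by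
  refine ⟨?_, ?_, ?_⟩
  · simp [Matrix.transpose_mul, Matrix.transpose_nonsing_inv, Matrix.mul_assoc]
  · by_cases h : IsUnit (Yᵀ * Y).det
    · calc _ = Y * ((Yᵀ * Y)⁻¹ * (Yᵀ * Y)) * (Yᵀ * Y)⁻¹ * Yᵀ := by simp only [Matrix.mul_assoc]
        _ = _ := by rw [Matrix.nonsing_inv_mul _ h, Matrix.mul_one]
    · simp [Matrix.nonsing_inv_apply_not_isUnit _ h]
  · intro h
    rw [Matrix.mul_assoc, Matrix.mul_assoc, Matrix.nonsing_inv_mul _ h, Matrix.mul_one]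

lemma proj_quad {n : ℕ} (P : Matrix (Fin n) (Fin n) ℝ) (h1 : Pᵀ = P) (h2 : P * P = P)
    (y v : Fin n → ℝ) (hy : P *ᵥ y = y) :
    (y ⬝ᵥ v)^2 ≤ (y ⬝ᵥ y) * (v ⬝ᵥ P *ᵥ v) := by
  have e1 : y ⬝ᵥ v = y ⬝ᵥ P *ᵥ v := by
    rw [Matrix.dotProduct_mulVec, ← Matrix.mulVec_transpose, h1, hy]
  have e2 : v ⬝ᵥ P *ᵥ v = P *ᵥ v ⬝ᵥ P *ᵥ v := by
    conv_lhs => rw [← h2, ← Matrix.mulVec_mulVec, Matrix.dotProduct_mulVec, ← Matrix.mulVec_transpose, h1]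
  rw [e1, e2]
  have := Finset.sum_mul_sq_le_sq_mul_sq Finset.univ y (P *ᵥ v)
  simpa [dotProduct, pow_two] using this

lemma proj_entry {n : ℕ} (P : Matrix (Fin n) (Fin n) ℝ) (h1 : Pᵀ = P) (h2 : P * P = P)
    (i j : Fin n) : |P i j| ≤ 1 := by
  have hs : ∀ k, P j k = P k j := fun k => congrFun (congrFun h1 k) j
  have e : P j j = ∑ k, (P k j)^2 := by
    conv_lhs => rw [← h2, Matrix.mul_apply]
    exact Finset.sum_congr rfl fun k _ => by rw [hs]; ring
  have a : (P j j)^2 ≤ P j j := by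
    conv_rhs => rw [e]
    exact Finset.single_le_sum (f := fun k => (P k j)^2) (fun k _ => sq_nonneg _) (Finset.mem_univ j)
  have b : (P i j)^2 ≤ P j j := by
    rw [e]
    exact Finset.single_le_sum (f := fun k => (P k j)^2) (fun k _ => sq_nonneg _) (Finset.mem_univ i)
  have : P j j ≤ 1 := by nlinarith
  exact abs_le_one_iff_mul_self_le_one.2 (by nlinarith)

lemma rayleigh {m : ℕ} (B : Matrix (Fin m) (Fin m) ℝ) (hH : B.IsHermitian) (w : Fin m → ℝ) :
    w ⬝ᵥ B *ᵥ w ≤ (⨆ i, hH.eigenvalues i) * (w ⬝ᵥ w) := by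
  have hb : BddAbove (Set.range hH.eigenvalues) := Set.finite_range _ |>.bddAbove
  set U : Matrix (Fin m) (Fin m) ℝ := hH.eigenvectorUnitary.1 with hU
  have hUU : U * Uᵀ = 1 := by
    have := Unitary.mul_star_self_of_mem hH.eigenvectorUnitary.2
    simpa [star_eq_conjTranspose] using this
  have hB : B = U * diagonal hH.eigenvalues * Uᵀ := by
    have := hH.spectral_theorem
    rw [Unitary.conjStarAlgAut_apply] at this
    simpa [star_eq_conjTranspose, Function.comp_def] using this
  set z := Uᵀ *ᵥ w with hz
  have e1 : w ⬝ᵥ w = ∑ i, z i * z i := by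
    change _ = z ⬝ᵥ z
    rw [hz, Matrix.dotProduct_mulVec, ← Matrix.mulVec_transpose, Matrix.transpose_transpose,
      Matrix.mulVec_mulVec, hUU, Matrix.one_mulVec]
  have e2 : w ⬝ᵥ B *ᵥ w = ∑ i, hH.eigenvalues i * (z i * z i) := by
    conv_lhs => rw [hB]
    rw [← Matrix.mulVec_mulVec, ← hz, ← Matrix.mulVec_mulVec, Matrix.dotProduct_mulVec,
      ← Matrix.mulVec_transpose, ← hz, dotProduct]
    exact Finset.sum_congr rfl fun i _ => by rw [Matrix.mulVec_diagonal]; ring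
  rw [e1, e2, Finset.mul_sum]
  exact Finset.sum_le_sum fun i _ => mul_le_mul_of_nonneg_right (le_ciSup hb i) (mul_self_nonneg _)

/-- a.s. invertibility -/
lemma ae_unit {m n l : ℕ} (C : Matrix (Fin n) (Fin m) ℝ) (E : Matrix (Fin m) (Fin l) ℝ)
    (hE : (C * E)ᵀ * (C * E) = 1) :
    ∀ᵐ Ω : Fin m → Fin l → ℝ
      ∂(Measure.pi fun _ : Fin m => Measure.pi fun _ : Fin l => gaussianReal 0 1),
      IsUnit ((C * Matrix.of Ω)ᵀ * (C * Matrix.of Ω)).det := by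
  have hac : (Measure.pi fun _ : Fin m => Measure.pi fun _ : Fin l => gaussianReal 0 1)
      ≪ (volume : Measure (Fin m → Fin l → ℝ)) :=
    ac_pi _ _ (ac_pi _ _ (gaussianReal_absolutelyContinuous 0 one_ne_zero) l) m
  have key : ∀ᵐ Ω : Fin m → Fin l → ℝ, Ω ∈ {Ω : Fin m → Fin l → ℝ |
      ((C * E)ᵀ * (C * Matrix.of Ω)).det ≠ 0} := by
    refine ae_mem_of_ae_add_linearMap_mem
      (LinearMap.toSpanSingleton ℝ (Fin m → Fin l → ℝ) (Matrix.of.symm E))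
      (volume : Measure ℝ) volume ?_ ?_
    · refine (measurableSet_singleton (0:ℝ)).compl.preimage (Continuous.measurable ?_)
      refine Continuous.matrix_det ?_
      refine continuous_const.matrix_mul (continuous_const.matrix_mul ?_)
      exact continuous_id
    · intro Ω
      set K := (C * E)ᵀ * (C * Matrix.of Ω) with hK
      have hfin : {t : ℝ | (-K).charpoly.eval t = 0}.Finite := by
        have := Polynomial.finite_setOfPred_isRoot (Matrix.charpoly_monic (-K)).ne_zero
        exact this
      filter_upwards [hfin.measure_zero volume |> measure_eq_zero_iff_ae_notMem.1] with t ht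
      change ¬ ((-K).charpoly.eval t = 0) at ht
      change ((C * E)ᵀ * (C * Matrix.of (Ω + (LinearMap.toSpanSingleton ℝ (Fin m → Fin l → ℝ)
        (Matrix.of.symm E)) t))).det ≠ 0
      rw [Matrix.eval_charpoly] at ht
      convert ht using 2
      have : Matrix.of (Ω + (LinearMap.toSpanSingleton ℝ (Fin m → Fin l → ℝ) (Matrix.of.symm E)) t)
        = Matrix.of Ω + t • E := by
        ext i j; simp
      rw [this, Matrix.mul_add, Matrix.mul_add, ← hK, Matrix.mul_smul, Matrix.mul_smul, hE]
      rw [sub_neg_eq_add, add_comm, Matrix.smul_one_eq_diagonal]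
      rfl
  filter_upwards [hac.ae_le key] with Ω h
  change ((C * E)ᵀ * (C * Matrix.of Ω)).det ≠ 0 at h
  have hinj : Function.Injective (C * Matrix.of Ω).mulVec := by
    have h' := Matrix.mulVec_injective_of_isUnit
      ((Matrix.isUnit_iff_isUnit_det _).2 (isUnit_iff_ne_zero.2 h))
    intro x y hxy
    apply h'
    rw [← Matrix.mulVec_mulVec, hxy, Matrix.mulVec_mulVec]
  have := Matrix.PosDef.conjTranspose_mul_self (C * Matrix.of Ω) hinj
  rw [Matrix.conjTranspose_eq_transpose_of_trivial] at this
  exact (Matrix.isUnit_iff_isUnit_det _).1 this.isUnit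

lemma meas_entry {m n l : ℕ} (C : Matrix (Fin n) (Fin m) ℝ) (i j : Fin n) :
    Measurable fun Ω : Fin m → Fin l → ℝ =>
      ((C * Matrix.of Ω) * ((C * Matrix.of Ω)ᵀ * (C * Matrix.of Ω))⁻¹ * (C * Matrix.of Ω)ᵀ) i j := by
  have c0 : Continuous fun Ω : Fin m → Fin l → ℝ => C * Matrix.of Ω :=
    continuous_const.matrix_mul (continuous_id (X := Fin m → Fin l → ℝ))
  have c1 := c0.matrix_transpose.matrix_mul c0
  have c2 := c1.matrix_adjugate
  have c3 := (c0.matrix_mul c2).matrix_mul c0.matrix_transpose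
  have c4 := c3.matrix_elem i j
  have := (c1.matrix_det.measurable.inv).mul c4.measurable
  convert this using 2 with Ω
  simp [Matrix.inv_def]

lemma swap_mp {m : ℕ} {X : Type*} [MeasurableSpace X] (μ : Measure X) [SigmaFinite μ]
    (σ : Equiv.Perm (Fin m)) :
    MeasurePreserving (fun Ω : Fin m → X => fun k => Ω (σ k))
      (Measure.pi fun _ => μ) (Measure.pi fun _ => μ) := by
  have := measurePreserving_piCongrLeft (fun _ : Fin m => μ) σ.symm
  convert this using 1
  ext Ω k
  obtain ⟨j, rfl⟩ := σ.symm.surjective k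
  rw [MeasurableEquiv.coe_piCongrLeft, Equiv.piCongrLeft_apply_apply]
  simp

lemma flip_mp {m l : ℕ} (i : Fin m) :
    MeasurePreserving (fun Ω : Fin m → Fin l → ℝ => fun k => if k = i then fun c => - Ω k c else Ω k)
      (Measure.pi fun _ : Fin m => Measure.pi fun _ : Fin l => gaussianReal 0 1)
      (Measure.pi fun _ : Fin m => Measure.pi fun _ : Fin l => gaussianReal 0 1) := by
  have hn : MeasurePreserving (fun x : ℝ => -x) (gaussianReal 0 1) (gaussianReal 0 1) :=
    ⟨measurable_neg, by rw [gaussianReal_map_neg]; simp⟩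
  have hr : MeasurePreserving (fun x : Fin l → ℝ => fun c => - x c)
      (Measure.pi fun _ : Fin l => gaussianReal 0 1) (Measure.pi fun _ : Fin l => gaussianReal 0 1) :=
    measurePreserving_pi _ _ (fun _ => hn)
  have := measurePreserving_pi
    (fun _ : Fin m => Measure.pi fun _ : Fin l => gaussianReal 0 1)
    (fun _ : Fin m => Measure.pi fun _ : Fin l => gaussianReal 0 1)
    (f := fun k => if k = i then (fun x : Fin l → ℝ => fun c => - x c) else id)
    (fun k => by
      split_ifs
      · exact hr
      · exact MeasurePreserving.id _)
  convert this using 1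
  ext Ω k c
  by_cases h : k = i <;> simp [h]

lemma f_meas {m l : ℕ} (c : Fin l) (i j : Fin m) :
    Measurable fun Ω : Fin m → Fin l → ℝ => Ω i c * Ω j c / ∑ k, (Ω k c)^2 := by
  fun_prop

lemma f_integrable {m l : ℕ} (c : Fin l) (i j : Fin m) :
    Integrable (fun Ω : Fin m → Fin l → ℝ => Ω i c * Ω j c / ∑ k, (Ω k c)^2)
      (Measure.pi fun _ : Fin m => Measure.pi fun _ : Fin l => gaussianReal 0 1) := by
  refine Integrable.of_bound (f_meas c i j).aestronglyMeasurable 1 (.of_forall fun Ω => ?_)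
  have hi := Finset.single_le_sum (f := fun k => (Ω k c)^2) (fun k _ => sq_nonneg _) (Finset.mem_univ i)
  have hj := Finset.single_le_sum (f := fun k => (Ω k c)^2) (fun k _ => sq_nonneg _) (Finset.mem_univ j)
  rw [Real.norm_eq_abs, abs_div]
  refine div_le_one_of_le₀ ?_ (abs_nonneg _)
  refine le_trans ?_ (le_abs_self _)
  rw [abs_le]
  constructor <;> nlinarith [sq_nonneg (Ω i c - Ω j c), sq_nonneg (Ω i c + Ω j c)]

lemma f_int {m l : ℕ} (hm : 0 < m) (c : Fin l)
    (hae : ∀ᵐ Ω : Fin m → Fin l → ℝ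
      ∂(Measure.pi fun _ : Fin m => Measure.pi fun _ : Fin l => gaussianReal 0 1),
      ∑ k, (Ω k c)^2 ≠ 0) (i j : Fin m) :
    ∫ Ω : Fin m → Fin l → ℝ, Ω i c * Ω j c / ∑ k, (Ω k c)^2
      ∂(Measure.pi fun _ : Fin m => Measure.pi fun _ : Fin l => gaussianReal 0 1)
      = if i = j then (m:ℝ)⁻¹ else 0 := by
  set μ := (Measure.pi fun _ : Fin m => Measure.pi fun _ : Fin l => gaussianReal 0 1) with hμ
  have diag : ∀ a b : Fin m, ∫ Ω : Fin m → Fin l → ℝ, Ω a c * Ω a c / ∑ k, (Ω k c)^2 ∂μ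
      = ∫ Ω : Fin m → Fin l → ℝ, Ω b c * Ω b c / ∑ k, (Ω k c)^2 ∂μ := by
    intro a b
    have hp := swap_mp (Measure.pi fun _ : Fin l => gaussianReal 0 1) (Equiv.swap a b)
    have := integral_map (μ := μ) hp.measurable.aemeasurable
      (f_meas c a a).aestronglyMeasurable
    rw [hμ, hp.map_eq, ← hμ] at this
    rw [this]
    refine integral_congr_ae (.of_forall fun Ω => ?_)
    simp only [Equiv.swap_apply_left]
    congr 1
    exact Equiv.sum_comp (Equiv.swap a b) (fun k => (Ω k c)^2)
  split_ifs with h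
  · subst h
    have hs : ∑ a : Fin m, ∫ Ω : Fin m → Fin l → ℝ, Ω a c * Ω a c / ∑ k, (Ω k c)^2 ∂μ = 1 := by
      rw [← integral_finsetSum _ (fun a _ => f_integrable c a a)]
      rw [integral_congr_ae (g := fun _ => (1:ℝ))]
      · simp [hμ]
      · filter_upwards [hae] with Ω hΩ
        rw [← Finset.sum_div]
        simp only [← pow_two]
        exact div_self hΩ
    rw [Finset.sum_congr rfl (fun a _ => diag a i)] at hs
    simp at hs
    have : (m:ℝ) ≠ 0 := by positivity
    exact eq_inv_of_mul_eq_one_right hs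
  · have hp := flip_mp (l := l) i
    have := integral_map (μ := μ) hp.measurable.aemeasurable
      (f_meas c i j).aestronglyMeasurable
    rw [hμ, hp.map_eq, ← hμ] at this
    have e : ∀ Ω : Fin m → Fin l → ℝ, ∀ k, (if k = i then fun c => - Ω k c else Ω k) c ^ 2 = (Ω k c)^2 := by
      intro Ω k
      split_ifs <;> simp
    have h' : ¬ j = i := fun h2 => h h2.symm
    simp only [e, h', if_true, if_false, neg_mul, neg_div, integral_neg] at this
    linarith

theorem stmt14 {m n l : ℕ} (hl : 1 ≤ l) (hlm : l ≤ m) (hln : l ≤ n)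
    (A : Matrix (Fin m) (Fin n) ℝ) (hA : Function.Injective A.mulVec)
    (G : Matrix (Fin n) (Fin n) ℝ) (hG : G.PosDef)
    (hH : (A * G * Aᵀ).IsHermitian) :
    let S : Matrix (Fin n) (Fin n) ℝ := CFC.sqrt G
    let ET : Matrix (Fin n) (Fin n) ℝ := Matrix.of fun i j =>
      ∫ Ω : Fin m → Fin l → ℝ,
        ((1 : Matrix (Fin n) (Fin n) ℝ) - S * Aᵀ * Matrix.of Ω *
          ((Matrix.of Ω)ᵀ * (A * G * Aᵀ) * Matrix.of Ω)⁻¹ *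
          (Matrix.of Ω)ᵀ * A * S) i j
        ∂(Measure.pi fun _ : Fin m => Measure.pi fun _ : Fin l => gaussianReal 0 1)
    ((1 : Matrix (Fin n) (Fin n) ℝ)
        - ((m : ℝ) * ⨆ i, hH.eigenvalues i)⁻¹ • (S * Aᵀ * A * S) - ET).PosSemidef ∧
      ((1 : Matrix (Fin n) (Fin n) ℝ) - ET).PosDef := by
  intro S ET
  set μ := (Measure.pi fun _ : Fin m => Measure.pi fun _ : Fin l => gaussianReal 0 1) with hμ
  set lam := ⨆ i, hH.eigenvalues i with hlam
  have hm : 0 < m := by omega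
  have hSS : S * S = G := CFC.sqrt_mul_sqrt_self G hG.posSemidef.nonneg
  have hSt : Sᵀ = S := by
    have h : S.PosSemidef := Matrix.nonneg_iff_posSemidef.1 (CFC.sqrt_nonneg G)
    have := h.isHermitian.eq
    rwa [Matrix.conjTranspose_eq_transpose_of_trivial] at this
  have hSu : IsUnit S := by
    have : IsUnit (S * S).det := by rw [hSS]; exact (Matrix.isUnit_iff_isUnit_det _).1 hG.isUnit
    rw [Matrix.det_mul] at this
    exact (Matrix.isUnit_iff_isUnit_det _).2 (isUnit_of_mul_isUnit_left this)
  set C := S * Aᵀ with hC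
  have hCt : Cᵀ = A * S := by rw [hC, Matrix.transpose_mul, hSt, Matrix.transpose_transpose]
  have hCC : Cᵀ * C = A * G * Aᵀ := by rw [hCt, hC, ← hSS]; simp only [Matrix.mul_assoc]
  have hinj : Function.Injective Cᵀ.mulVec := by
    intro x y hxy
    apply Matrix.mulVec_injective_of_isUnit hSu
    apply hA
    simp only [hCt] at hxy
    simpa [Matrix.mulVec_mulVec] using hxy
  have hMpd : (C * Cᵀ).PosDef := by
    have := Matrix.PosDef.conjTranspose_mul_self Cᵀ hinj
    rwa [Matrix.conjTranspose_eq_transpose_of_trivial, Matrix.transpose_transpose] at this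
  have hM : S * Aᵀ * A * S = C * Cᵀ := by rw [hCt, hC]; simp only [Matrix.mul_assoc]
  -- right inverse
  obtain ⟨E, hE⟩ : ∃ E : Matrix (Fin m) (Fin l) ℝ, (C * E)ᵀ * (C * E) = 1 := by
    let J : Matrix (Fin n) (Fin l) ℝ := (1 : Matrix (Fin n) (Fin n) ℝ).submatrix id (Fin.castLE hln)
    refine ⟨Cᵀ * (C * Cᵀ)⁻¹ * J, ?_⟩
    have : C * (Cᵀ * (C * Cᵀ)⁻¹ * J) = J := by
      rw [← Matrix.mul_assoc, ← Matrix.mul_assoc, Matrix.mul_nonsing_inv _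
        ((Matrix.isUnit_iff_isUnit_det _).1 hMpd.isUnit), Matrix.one_mul]
    rw [this]
    ext i j
    simp [J, Matrix.mul_apply, Matrix.one_apply]
  have hunit := ae_unit C E hE
  set c : Fin l := ⟨0, hl⟩
  let P : (Fin m → Fin l → ℝ) → Matrix (Fin n) (Fin n) ℝ := fun Ω =>
    (C * Matrix.of Ω) * ((C * Matrix.of Ω)ᵀ * (C * Matrix.of Ω))⁻¹ * (C * Matrix.of Ω)ᵀ
  have hP : ∀ Ω, C * Matrix.of Ω * ((Matrix.of Ω)ᵀ * (A * G * Aᵀ) * Matrix.of Ω)⁻¹ *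
          (Matrix.of Ω)ᵀ * A * S = P Ω := by
    intro Ω
    simp only [P]
    rw [← hCC, Matrix.transpose_mul C, hCt]
    simp only [Matrix.mul_assoc]
  have hPs : ∀ Ω, (P Ω)ᵀ = P Ω := fun Ω => (proj_facts _).1
  have hPP : ∀ Ω, P Ω * P Ω = P Ω := fun Ω => (proj_facts _).2.1
  have hPint : ∀ i j, Integrable (fun Ω => P Ω i j) μ := fun i j =>
    Integrable.of_bound (meas_entry C i j).aestronglyMeasurable 1
      (.of_forall fun Ω => proj_entry _ (hPs Ω) (hPP Ω) i j)
  let EP : Matrix (Fin n) (Fin n) ℝ := Matrix.of fun i j => ∫ Ω, P Ω i j ∂μ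
  have hET : ET = 1 - EP := by
    ext i j
    change ∫ Ω, (1 - C * Matrix.of Ω * ((Matrix.of Ω)ᵀ * (A * G * Aᵀ) * Matrix.of Ω)⁻¹ *
          (Matrix.of Ω)ᵀ * A * S : Matrix (Fin n) (Fin n) ℝ) i j ∂μ
        = (1 : Matrix (Fin n) (Fin n) ℝ) i j - ∫ Ω, P Ω i j ∂μ
    simp only [hP, Matrix.sub_apply]
    rw [integral_sub (integrable_const _) (hPint i j)]
    simp [hμ]
  have hcol : ∀ Ω : Fin m → Fin l → ℝ, C *ᵥ (fun k => Ω k c) = (C * Matrix.of Ω).col c := by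
    intro Ω
    ext i
    simp [Matrix.mulVec, Matrix.mul_apply, dotProduct]
  have hPy : ∀ᵐ Ω ∂μ, P Ω *ᵥ (C *ᵥ (fun k => Ω k c)) = C *ᵥ (fun k => Ω k c) ∧
      C *ᵥ (fun k => Ω k c) ≠ 0 := by
    filter_upwards [hunit] with Ω h
    have h3 := (proj_facts (C * Matrix.of Ω)).2.2 h
    have e : (C *ᵥ (fun k => Ω k c)) = (C * Matrix.of Ω) *ᵥ (Pi.single c 1) := by
      rw [hcol]; simp
    refine ⟨?_, ?_⟩
    · rw [e, Matrix.mulVec_mulVec]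
      simp only [P, h3]
    · intro h0
      rw [e] at h0
      have h1 : ((C * Matrix.of Ω)ᵀ * (C * Matrix.of Ω)) *ᵥ (Pi.single c 1) = 0 := by
        rw [← Matrix.mulVec_mulVec, h0, Matrix.mulVec_zero]
      have h2 := Matrix.mulVec_injective_of_isUnit ((Matrix.isUnit_iff_isUnit_det _).2 h)
        (h1.trans (Matrix.mulVec_zero _).symm)
      have := congrFun h2 c
      simp at this
  have hne : ∀ᵐ Ω ∂μ, ∑ k, (Ω k c)^2 ≠ 0 := by
    filter_upwards [hPy] with Ω h hz
    apply h.2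
    have : (fun k => Ω k c) = 0 := by
      ext k
      have := (Finset.sum_eq_zero_iff_of_nonneg (fun k _ => sq_nonneg (Ω k c))).1 hz k (Finset.mem_univ k)
      simpa using this
    rw [this, Matrix.mulVec_zero]
  have hray : ∀ w : Fin m → ℝ, (C *ᵥ w) ⬝ᵥ (C *ᵥ w) ≤ lam * ∑ k, (w k)^2 := by
    intro w
    have := rayleigh _ hH w
    rw [← hlam] at this
    rw [← hCC, ← Matrix.mulVec_mulVec, Matrix.dotProduct_mulVec, ← Matrix.mulVec_transpose,
      Matrix.transpose_transpose] at this
    simpa [dotProduct, pow_two] using this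
  have hlampos : 0 < lam := by
    have : NeZero μ := by rw [hμ]; infer_instance
    obtain ⟨Ω, hΩ⟩ := hPy.exists
    have h1 := hray (fun k => Ω k c)
    have h2 : 0 < (C *ᵥ (fun k => Ω k c)) ⬝ᵥ (C *ᵥ (fun k => Ω k c)) := by
      have := Matrix.dotProduct_star_self_pos_iff.2 hΩ.2
      simpa using this
    by_contra hle
    have h3 : 0 ≤ ∑ k, (Ω k c)^2 := Finset.sum_nonneg fun _ _ => sq_nonneg _
    nlinarith
  have hcpos : 0 < ((m:ℝ) * lam)⁻¹ := by positivity
  have main : (EP - ((m:ℝ) * lam)⁻¹ • (C * Cᵀ)).PosSemidef := by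
    refine Matrix.PosSemidef.of_dotProduct_mulVec_nonneg ?_ ?_
    · change _ = _
      rw [Matrix.conjTranspose_eq_transpose_of_trivial, Matrix.transpose_sub, Matrix.transpose_smul,
        Matrix.transpose_mul, Matrix.transpose_transpose]
      congr 1
      ext i j
      simp only [EP, Matrix.transpose_apply, Matrix.of_apply]
      congr 1
      ext Ω
      exact congrFun (congrFun (hPs Ω) i) j
    · intro v
      set u := Cᵀ *ᵥ v with hu
      have q0 : ∀ Q : Matrix (Fin n) (Fin n) ℝ, v ⬝ᵥ Q *ᵥ v = ∑ i, ∑ j, (v i * v j) * Q i j := by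
        intro Q
        simp only [dotProduct, Matrix.mulVec, Finset.mul_sum]
        exact Finset.sum_congr rfl fun i _ => Finset.sum_congr rfl fun j _ => by ring
      have q1 : v ⬝ᵥ EP *ᵥ v = ∫ Ω, v ⬝ᵥ P Ω *ᵥ v ∂μ := by
        simp only [q0]
        rw [integral_finsetSum _ (fun i _ => integrable_finsetSum _ fun j _ => (hPint i j).const_mul _)]
        refine Finset.sum_congr rfl fun i _ => ?_
        rw [integral_finsetSum _ (fun j _ => (hPint i j).const_mul _)]
        refine Finset.sum_congr rfl fun j _ => ?_
        rw [integral_const_mul]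
        rfl
      have i1 : Integrable (fun Ω => v ⬝ᵥ P Ω *ᵥ v) μ := by
        simp only [q0]
        exact integrable_finsetSum _ fun i _ => integrable_finsetSum _ fun j _ => (hPint i j).const_mul _
      have q2 : v ⬝ᵥ (C * Cᵀ) *ᵥ v = ∑ i, u i * u i := by
        rw [← Matrix.mulVec_mulVec, Matrix.dotProduct_mulVec, ← Matrix.mulVec_transpose]
        rfl
      let F : (Fin m → Fin l → ℝ) → ℝ := fun Ω =>
        ∑ i, ∑ j, (lam⁻¹ * (u i * u j)) * (Ω i c * Ω j c / ∑ k, (Ω k c)^2)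
      have i2 : Integrable F μ :=
        integrable_finsetSum _ fun i _ => integrable_finsetSum _ fun j _ =>
          (f_integrable c i j).const_mul _
      have q3 : ∫ Ω, F Ω ∂μ = ((m:ℝ) * lam)⁻¹ * ∑ i, u i * u i := by
        simp only [F]
        rw [integral_finsetSum _ (fun i _ => integrable_finsetSum _ fun j _ =>
          (f_integrable c i j).const_mul _), Finset.mul_sum]
        refine Finset.sum_congr rfl fun i _ => ?_
        rw [integral_finsetSum _ (fun j _ => (f_integrable c i j).const_mul _)]
        simp only [integral_const_mul]
        rw [Finset.sum_congr rfl fun j _ => by rw [f_int hm c hne i j]]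
        simp
        ring
      have q4 : ∀ Ω, F Ω = lam⁻¹ * ((fun k => Ω k c) ⬝ᵥ u)^2 / ∑ k, (Ω k c)^2 := by
        intro Ω
        simp only [F, dotProduct]
        rw [pow_two, Finset.sum_mul_sum, Finset.mul_sum, Finset.sum_div]
        refine Finset.sum_congr rfl fun i _ => ?_
        rw [Finset.mul_sum, Finset.sum_div]
        exact Finset.sum_congr rfl fun j _ => by ring
      have hle : ∫ Ω, F Ω ∂μ ≤ ∫ Ω, v ⬝ᵥ P Ω *ᵥ v ∂μ := by
        refine integral_mono_ae i2 i1 ?_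
        filter_upwards [hPy, hne] with Ω h1 h2
        have h3 : 0 < ∑ k, (Ω k c)^2 :=
          lt_of_le_of_ne (Finset.sum_nonneg fun _ _ => sq_nonneg _) (Ne.symm h2)
        have h4 := proj_quad _ (hPs Ω) (hPP Ω) _ v h1.1
        have h5 := hray (fun k => Ω k c)
        have h6 : (C *ᵥ (fun k => Ω k c)) ⬝ᵥ v = (fun k => Ω k c) ⬝ᵥ u := by
          rw [hu, Matrix.dotProduct_mulVec, ← Matrix.mulVec_transpose, Matrix.transpose_transpose]
        have h7 : 0 ≤ v ⬝ᵥ P Ω *ᵥ v := by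
          rw [← hPP Ω, ← Matrix.mulVec_mulVec, Matrix.dotProduct_mulVec, ← Matrix.mulVec_transpose,
            hPs]
          exact Finset.sum_nonneg fun _ _ => mul_self_nonneg _
        rw [h6] at h4
        rw [q4, div_le_iff₀ h3, inv_mul_le_iff₀ hlampos]
        calc _ ≤ _ := h4
          _ ≤ _ := mul_le_mul_of_nonneg_right h5 h7
          _ = _ := by ring
      rw [q3] at hle
      simp only [star_trivial, Matrix.sub_mulVec, Matrix.smul_mulVec, dotProduct_sub,
        dotProduct_smul, q1, q2, smul_eq_mul]
      linarith
  constructor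
  · rw [hM, hET]
    convert main using 1
    abel
  · rw [hET]
    have := Matrix.PosDef.posSemidef_add main (hMpd.smul hcpos)
    convert this using 1
    abel
end

section
/- Let A be an n×n real invertible matrix, Y, Z real n×l matrices with E = Yᵀ A Z invertible, and B an n×n real invertible matrix. Define Ξ = Z E⁻¹ Yᵀ, T = I − Ξ A, S = I − A Ξ, and the balancing Neumann–Neumann preconditioner P_BNN = T B⁻¹ S + Z E⁻¹ Yᵀ. Then the error transfer operator satisfies I − P_BNN A = T (I − B⁻¹ A) T. -/
open Matrix

/-- the error transfer operator of the abstract balancing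
Neumann-Neumann preconditioner `P_BNN = T B⁻¹ S + Z E⁻¹ Yᵀ` satisfies
`I - P_BNN A = T (I - B⁻¹ A) T`. -/
theorem stmt18 {n l : ℕ} (A B : Matrix (Fin n) (Fin n) ℝ)
    (hA : IsUnit A) (hB : IsUnit B)
    (Y Z : Matrix (Fin n) (Fin l) ℝ) (hE : IsUnit (Yᵀ * A * Z)) :
    let Ξ : Matrix (Fin n) (Fin n) ℝ := Z * (Yᵀ * A * Z)⁻¹ * Yᵀ
    let T : Matrix (Fin n) (Fin n) ℝ := 1 - Ξ * A
    let S : Matrix (Fin n) (Fin n) ℝ := 1 - A * Ξ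
    let P : Matrix (Fin n) (Fin n) ℝ := T * B⁻¹ * S + Z * (Yᵀ * A * Z)⁻¹ * Yᵀ
    1 - P * A = T * (1 - B⁻¹ * A) * T := by
  intro Ξ T S P
  have h1 : Ξ * A * Ξ = Ξ := by
    have hdet := (Matrix.isUnit_iff_isUnit_det _).1 hE
    calc Ξ * A * Ξ
        = Z * ((Yᵀ * A * Z)⁻¹ * (Yᵀ * A * Z)) * (Yᵀ * A * Z)⁻¹ * Yᵀ := by
          simp only [Ξ, Matrix.mul_assoc]
      _ = Ξ := by rw [Matrix.nonsing_inv_mul _ hdet, Matrix.mul_one]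
  have hT : T * T = T := by
    have h2 : T * T = 1 - Ξ * A - Ξ * A + Ξ * A * Ξ * A := by
      simp only [T]; noncomm_ring
    rw [h2, h1]; simp [T]
  have hS : S * A = A * T := by
    simp only [S, T]; noncomm_ring
  have hP : P = T * B⁻¹ * S + Ξ := rfl
  calc 1 - P * A = (1 - Ξ * A) - T * B⁻¹ * (S * A) := by rw [hP]; noncomm_ring
    _ = T * T - T * B⁻¹ * (A * T) := by rw [hS, hT]
    _ = T * (1 - B⁻¹ * A) * T := by noncomm_ring
end
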